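/- Suppose the group homomorphism Φ : (Ĝ)^V → (Ĝ)^E defined by Φ((χ_v)_{v∈V})(ℓ) = Π_{v∈V} χ_v^{ε_v(ℓ)} is injective. Then the unital ℂ-subalgebra of End_ℂ(H) generated by all right-translation operators R^g_ℓ (ℓ ∈ E, g ∈ G) and all diagonal character operators S^χ_v (v ∈ V, χ ∈ Ĝ) is isomorphic as a ℂ-algebra to the direct sum of |G|^{|E|−|V|} copies of the matrix algebra M_{|G|^{|V|}}(ℂ). -/

import Mathlib

noncomputable section

open scoped BigOperators

/-- The Hilbert space `H = ℂ[G^E]`, realized as functions `(E → G) → ℂ`;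
the basis ket `|f⟩` is the indicator function of `f : E → G`. -/
abbrev HL (G E : Type) : Type := (E → G) → ℂ

variable (G : Type) [CommGroup G] [Fintype G] [DecidableEq G]
  (E V : Type) [Fintype E] [DecidableEq E] [Fintype V]

/-- `R^g_ℓ`: right translation at the edge `ℓ`, `|f⟩ ↦ |f'⟩` with
`f'(ℓ) = f(ℓ)·g` and `f' = f` elsewhere. -/
def RopL (ℓ : E) (g : G) : Module.End ℂ (HL G E) :=
  LinearMap.funLeft ℂ ℂ fun x => Function.update x ℓ (x ℓ * g⁻¹)

/-- `S^χ_v`: the diagonal character operator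
`S^χ_v |f⟩ = (∏_{ℓ ∈ E} χ(f(ℓ))^{ε_v(ℓ)}) |f⟩`. -/
def SopL (ε : V → E → ℤ) (v : V) (χ : G →* ℂˣ) : Module.End ℂ (HL G E) where
  toFun f := fun x => (∏ ℓ : E, ((χ (x ℓ) ^ ε v ℓ : ℂˣ) : ℂ)) * f x
  map_add' f₁ f₂ := by funext x; simp only [Pi.add_apply]; ring
  map_smul' r f := by
    funext x
    simp only [Pi.smul_apply, smul_eq_mul, RingHom.id_apply]
    ring

/-- The dual group of `G`. -/
def DualL : Type := G →* ℂˣ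

instance commGroup_dualL : CommGroup (DualL G) :=
  (MonoidHom.instCommGroup : CommGroup (G →* ℂˣ))

instance funLike_dualL : FunLike (DualL G) G ℂˣ :=
  inferInstanceAs (FunLike (G →* ℂˣ) G ℂˣ)

instance homClass_dualL : MonoidHomClass (DualL G) G ℂˣ :=
  inferInstanceAs (MonoidHomClass (G →* ℂˣ) G ℂˣ)

@[simp]
theorem dualL_one (g : G) : (1 : DualL G) g = 1 := rfl

@[simp]
theorem dualL_mul (χ η : DualL G) (g : G) : (χ * η) g = χ g * η g := rfl

@[simp]
theorem dualL_zpow (χ : DualL G) (n : ℤ) (g : G) : (χ ^ n) g = χ g ^ n := rfl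

/-- The character of `G^E` attached to a family of characters of `G`. -/
def chiL (ψ : E → DualL G) : (E → G) →* ℂ where
  toFun x := ∏ ℓ, ((ψ ℓ (x ℓ) : ℂˣ) : ℂ)
  map_one' := by simp
  map_mul' x y := by simp [Finset.prod_mul_distrib]

theorem chiL_apply (ψ : E → DualL G) (x : E → G) :
    chiL G E ψ x = ∏ ℓ, ((ψ ℓ (x ℓ) : ℂˣ) : ℂ) := rfl

theorem chiL_injective : Function.Injective (chiL G E) := by
  intro ψ φ h
  funext ℓ
  refine DFunLike.ext _ _ fun g => Units.ext ?_
  have := DFunLike.congr_fun h (Pi.mulSingle ℓ g)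
  rw [chiL_apply, chiL_apply, Finset.prod_eq_single ℓ, Finset.prod_eq_single ℓ] at this
  · simpa using this
  all_goals simp +contextual [Pi.mulSingle_eq_of_ne]

theorem card_dualL : Nat.card (DualL G) = Fintype.card G := by
  change Nat.card (G →* ℂˣ) = Fintype.card G
  rw [CommGroup.card_monoidHom_of_hasEnoughRootsOfUnity, Nat.card_eq_fintype_card]

instance finite_dualL : Finite (DualL G) := by
  apply Nat.finite_of_card_ne_zero
  rw [card_dualL]
  exact Fintype.card_ne_zero

instance fintype_dualL : Fintype (DualL G) := Fintype.ofFinite _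

instance decEq_dualL : DecidableEq (DualL G) := Classical.decEq _

theorem linInd_chiL : LinearIndependent ℂ (fun ψ => (chiL G E ψ : HL G E)) :=
  (linearIndependent_monoidHom (E → G) ℂ).comp _ (chiL_injective G E)

/-- The Fourier basis. -/
def basL : Module.Basis (E → DualL G) ℂ (HL G E) :=
  basisOfLinearIndependentOfCardEqFinrank (linInd_chiL G E) (by
    have := card_dualL G
    rw [Nat.card_eq_fintype_card] at this
    simp [Module.finrank_fintype_fun_eq_card, this])

theorem basL_apply (ψ : E → DualL G) (x : E → G) :
    basL G E ψ x = ∏ ℓ, ((ψ ℓ (x ℓ) : ℂˣ) : ℂ) := by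
  simp [basL, chiL_apply]

/-- Multiplication by a character. -/
def mulL : (E → DualL G) →* Module.End ℂ (HL G E) where
  toFun τ := LinearMap.mulLeft ℂ (chiL G E τ : HL G E)
  map_one' := by
    ext h x
    simp [chiL_apply]
  map_mul' τ σ := by
    ext h x
    simp [chiL_apply, Finset.prod_mul_distrib, mul_assoc]

theorem mulL_bas (τ ψ : E → DualL G) :
    mulL G E τ (basL G E ψ) = basL G E (τ * ψ) := by
  funext x
  simp [mulL, basL_apply, chiL_apply, Finset.prod_mul_distrib]

/-- Operators diagonal in the Fourier basis. -/
def diaL : ((E → DualL G) → ℂ) →ₐ[ℂ] Module.End ℂ (HL G E) :=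
  (Matrix.toLinAlgEquiv (basL G E)).toAlgHom.comp (Matrix.diagonalAlgHom ℂ)

theorem diaL_bas (f : (E → DualL G) → ℂ) (ψ : E → DualL G) :
    diaL G E f (basL G E ψ) = f ψ • basL G E ψ := by
  simp only [diaL, AlgHom.comp_apply]
  change Matrix.toLinAlgEquiv (basL G E) (Matrix.diagonal f) _ = _
  rw [Matrix.toLinAlgEquiv_self, Finset.sum_eq_single ψ]
  · simp
  · intro b _ hb
    simp [Matrix.diagonal_apply_ne _ hb]
  · simp

theorem RopL_eq (ℓ : E) (g : G) :
    RopL G E ℓ g = diaL G E (fun ψ => ((ψ ℓ g⁻¹ : ℂˣ) : ℂ)) := by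
  apply (basL G E).ext
  intro ψ
  rw [diaL_bas]
  funext x
  simp only [RopL, LinearMap.funLeft_apply, basL_apply, Pi.smul_apply, smul_eq_mul]
  rw [← Finset.mul_prod_erase _ _ (Finset.mem_univ ℓ),
    ← Finset.mul_prod_erase Finset.univ (fun ℓ => ((ψ ℓ (x ℓ) : ℂˣ) : ℂ)) (Finset.mem_univ ℓ)]
  rw [Finset.prod_congr rfl (g := fun ℓ => ((ψ ℓ (x ℓ) : ℂˣ) : ℂ))]
  · simp only [Function.update_self, map_mul, Units.val_mul]
    ring
  · intro k hk
    rw [Function.update_of_ne (Finset.ne_of_mem_erase hk)]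

theorem SopL_eq (ε : V → E → ℤ) (v : V) (χ : DualL G) :
    SopL G E V ε v χ = mulL G E (fun ℓ => χ ^ ε v ℓ) := by
  ext h x
  simp only [SopL, mulL, chiL_apply]
  rfl

/-- The algebra generated. -/
abbrev algL (ε : V → E → ℤ) : Subalgebra ℂ (Module.End ℂ (HL G E)) :=
  Algebra.adjoin ℂ
        ({T : Module.End ℂ (HL G E) | ∃ (ℓ : E) (g : G), T = RopL G E ℓ g} ∪
         {T | ∃ (v : V) (χ : G →* ℂˣ), T = SopL G E V ε v χ})

/-- The homomorphism `Φ`. -/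
def PhiL (ε : V → E → ℤ) : (V → DualL G) →* (E → DualL G) where
  toFun χ := fun ℓ : E => ∏ v : V, (χ v) ^ ε v ℓ
  map_one' := by funext ℓ; simp
  map_mul' χ η := by funext ℓ; simp [mul_zpow, Finset.prod_mul_distrib]

theorem mulL_mem (ε : V → E → ℤ) (χ : V → DualL G) :
    mulL G E (PhiL G E V ε χ) ∈ algL G E V ε := by
  have h : PhiL G E V ε χ = ∏ v, (fun ℓ => χ v ^ ε v ℓ) := by
    funext ℓ; simp [PhiL]
  change PhiL G E V ε χ ∈ (algL G E V ε).toSubmonoid.comap (mulL G E)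
  rw [h]
  refine prod_mem fun v _ => ?_
  change mulL G E _ ∈ algL G E V ε
  have hS := SopL_eq G E V ε v (χ v)
  rw [← hS]
  exact Algebra.subset_adjoin (Or.inr ⟨v, χ v, rfl⟩)

theorem diaL_mem (ε : V → E → ℤ) (j : E → DualL G) :
    diaL G E (Pi.single j 1) ∈ algL G E V ε := by
  set A := (algL G E V ε).comap (diaL G E) with hA
  change Pi.single j 1 ∈ A
  have hR : ∀ (ℓ : E) (g : G),
      (fun ψ : E → DualL G => ((ψ ℓ g : ℂˣ) : ℂ)) ∈ A := by
    intro ℓ g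
    change diaL G E _ ∈ algL G E V ε
    have := RopL_eq G E ℓ g⁻¹
    rw [inv_inv] at this
    rw [← this]
    exact Algebra.subset_adjoin (Or.inl ⟨ℓ, g⁻¹, rfl⟩)
  have hsep : ∀ i : E → DualL G, ∃ f ∈ A, i ≠ j → (f i = 0 ∧ f j = 1) := by
    intro i
    by_cases hij : i = j
    · exact ⟨0, zero_mem _, fun h => absurd hij h⟩
    obtain ⟨ℓ, hℓ⟩ := Function.ne_iff.mp hij
    obtain ⟨g, hg⟩ := DFunLike.ne_iff.mp hℓ
    have hg' : ((j ℓ g : ℂˣ) : ℂ) - ((i ℓ g : ℂˣ) : ℂ) ≠ 0 := by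
      intro h
      exact hg (Units.ext (sub_eq_zero.mp h).symm)
    refine ⟨(((j ℓ g : ℂˣ) : ℂ) - ((i ℓ g : ℂˣ) : ℂ))⁻¹ •
      ((fun ψ : E → DualL G => ((ψ ℓ g : ℂˣ) : ℂ)) - algebraMap ℂ _ ((i ℓ g : ℂˣ) : ℂ)),
      A.smul_mem (A.sub_mem (hR ℓ g) (A.algebraMap_mem _)) _, fun _ => ⟨?_, ?_⟩⟩
    · simp
    · simp [hg']
  choose f hf hf' using hsep
  have : (Pi.single j 1 : (E → DualL G) → ℂ) = ∏ i ∈ Finset.univ.erase j, f i := by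
    funext k
    rw [Finset.prod_apply]
    by_cases hk : k = j
    · subst hk
      rw [Pi.single_eq_same, Finset.prod_eq_one]
      intro i hi
      exact (hf' i (Finset.ne_of_mem_erase hi)).2
    · rw [Pi.single_eq_of_ne hk]
      exact (Finset.prod_eq_zero (f := fun c => f c k)
        (Finset.mem_erase.mpr ⟨hk, Finset.mem_univ k⟩) (hf' k hk).1).symm
  rw [this]
  exact prod_mem fun i _ => hf i

theorem single_mem (ε : V → E → ℤ) (i j : E → DualL G)
    (h : i * j⁻¹ ∈ (PhiL G E V ε).range) (c : ℂ) :
    Matrix.toLinAlgEquiv (basL G E) (Matrix.single i j c) ∈ algL G E V ε := by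
  obtain ⟨χ, hχ⟩ := h
  have : Matrix.toLinAlgEquiv (basL G E) (Matrix.single i j c)
      = c • (mulL G E (PhiL G E V ε χ) * diaL G E (Pi.single j 1)) := by
    apply (basL G E).ext
    intro ψ
    rw [Matrix.toLinAlgEquiv_self, LinearMap.smul_apply, Module.End.mul_apply, diaL_bas, map_smul,
      mulL_bas, hχ]
    by_cases hj : ψ = j
    · subst hj
      rw [Finset.sum_eq_single i]
      · simp
      · intro b _ hb
        simp [Matrix.single_apply, hb.symm]
      · simp
    · rw [Pi.single_eq_of_ne hj]
      simp [Matrix.single_apply, Ne.symm hj]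
  rw [this]
  exact Subalgebra.smul_mem _ (mul_mem (mulL_mem G E V ε χ) (diaL_mem G E V ε j)) _

/-- Block matrices as operators. -/
def thetaL {m o : Type} [Fintype m] [Fintype o] [DecidableEq m] [DecidableEq o]
    (e : m × o ≃ (E → DualL G)) :
    (o → Matrix m m ℂ) →ₐ[ℂ] Module.End ℂ (HL G E) :=
  (((Matrix.reindexAlgEquiv ℂ ℂ e).trans (Matrix.toLinAlgEquiv (basL G E))).toAlgHom).comp
    { Matrix.blockDiagonalRingHom m o ℂ with
      commutes' := fun r => by
        ext ⟨a, b⟩ ⟨c, d⟩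
        simp [Matrix.blockDiagonal_apply, Matrix.algebraMap_matrix_apply, Prod.ext_iff]
        grind }

theorem thetaL_apply {m o : Type} [Fintype m] [Fintype o] [DecidableEq m] [DecidableEq o]
    (e : m × o ≃ (E → DualL G)) (M : o → Matrix m m ℂ) :
    thetaL G E e M = Matrix.toLinAlgEquiv (basL G E)
      (Matrix.reindex e e (Matrix.blockDiagonal M)) := rfl

theorem thetaL_injective {m o : Type} [Fintype m] [Fintype o] [DecidableEq m] [DecidableEq o]
    (e : m × o ≃ (E → DualL G)) : Function.Injective (thetaL G E e) := by
  intro M N h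
  rw [thetaL_apply, thetaL_apply] at h
  exact Matrix.blockDiagonal_injective
    ((Matrix.reindex e e).injective ((Matrix.toLinAlgEquiv (basL G E)).injective h))

theorem mem_range_thetaL {m o : Type} [Fintype m] [Fintype o] [DecidableEq m] [DecidableEq o]
    (e : m × o ≃ (E → DualL G)) (N : Matrix (E → DualL G) (E → DualL G) ℂ)
    (hN : ∀ i j, (e.symm i).2 ≠ (e.symm j).2 → N i j = 0) :
    Matrix.toLinAlgEquiv (basL G E) N ∈ (thetaL G E e).range := by
  refine ⟨fun k => Matrix.of fun p q => N (e (p, k)) (e (q, k)), ?_⟩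
  change thetaL G E e _ = _
  rw [thetaL_apply]
  congr 1
  ext i j
  obtain ⟨⟨p, k⟩, rfl⟩ := e.surjective i
  obtain ⟨⟨q, l⟩, rfl⟩ := e.surjective j
  have := hN (e (p, k)) (e (q, l))
  simp only [Equiv.symm_apply_apply] at this
  by_cases hkl : k = l
  · subst hkl
    simp [Matrix.blockDiagonal_apply]
  · simp [Matrix.blockDiagonal_apply, hkl, this hkl]

theorem range_thetaL (ε : V → E → ℤ)
    {m o : Type} [Fintype m] [Fintype o] [DecidableEq m] [DecidableEq o]
    (e : m × o ≃ (E → DualL G))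
    (he : ∀ i j, (e.symm i).2 = (e.symm j).2 ↔ i * j⁻¹ ∈ (PhiL G E V ε).range) :
    (thetaL G E e).range = algL G E V ε := by
  apply le_antisymm
  · rintro _ ⟨M, rfl⟩
    change thetaL G E e M ∈ _
    rw [thetaL_apply]
    set N := Matrix.reindex e e (Matrix.blockDiagonal M) with hN
    rw [Matrix.matrix_eq_sum_single N, map_sum]
    refine sum_mem fun i _ => ?_
    rw [map_sum]
    refine sum_mem fun j _ => ?_
    by_cases hij : (e.symm i).2 = (e.symm j).2
    · exact single_mem G E V ε i j ((he i j).mp hij) _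
    · have : N i j = 0 := by
        simp [hN, Matrix.blockDiagonal_apply, hij]
      rw [this, Matrix.single_zero, map_zero]
      exact zero_mem _
  · rw [Algebra.adjoin_le_iff]
    rintro T (⟨ℓ, g, rfl⟩ | ⟨v, χ, rfl⟩)
    · rw [RopL_eq]
      refine mem_range_thetaL G E e (Matrix.diagonal _) fun i j hij => ?_
      exact Matrix.diagonal_apply_ne _ (fun h => hij (by rw [h]))
    · obtain ⟨χ', rfl⟩ : ∃ χ' : DualL G, χ' = χ := ⟨χ, rfl⟩
      rw [SopL_eq, ← Matrix.toLinAlgEquiv_toMatrixAlgEquiv (basL G E) (mulL G E _)]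
      refine mem_range_thetaL G E e _ fun i j hij => ?_
      rw [LinearMap.toMatrixAlgEquiv_apply, mulL_bas, Module.Basis.repr_self,
        Finsupp.single_apply, if_neg]
      rintro rfl
      apply hij
      rw [he, mul_inv_cancel_right]
      classical
      refine ⟨Pi.mulSingle v χ', ?_⟩
      funext ℓ
      change ∏ w, (Pi.mulSingle v χ' : V → DualL G) w ^ ε w ℓ = _
      rw [Finset.prod_eq_single v]
      · rw [Pi.mulSingle_eq_same]
      · intro w _ hw
        rw [Pi.mulSingle_eq_of_ne hw, one_zpow]
      · simp

/-- if the homomorphism `Φ : (Ĝ)^V → (Ĝ)^E`,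
`Φ((χ_v)_v)(ℓ) = ∏_v χ_v^{ε_v(ℓ)}`, is injective, then the unital ℂ-algebra generated
by all `R^g_ℓ` and all `S^χ_v` is isomorphic to the direct sum of `|G|^(|E|-|V|)`
copies of `M_{|G|^{|V|}}(ℂ)`. -/
theorem stmt19 (ε : V → E → ℤ)
    (hΦ : Function.Injective
      (fun (χ : V → (G →* ℂˣ)) => fun ℓ : E => ∏ v : V, (χ v) ^ ε v ℓ)) :
    Nonempty (↥(Algebra.adjoin ℂ
        ({T : Module.End ℂ (HL G E) | ∃ (ℓ : E) (g : G), T = RopL G E ℓ g} ∪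
         {T | ∃ (v : V) (χ : G →* ℂˣ), T = SopL G E V ε v χ}))
      ≃ₐ[ℂ]
      (Fin (Fintype.card G ^ (Fintype.card E - Fintype.card V)) →
        Matrix (Fin (Fintype.card G ^ Fintype.card V))
          (Fin (Fintype.card G ^ Fintype.card V)) ℂ)) := by
  classical
  have hinj : Function.Injective (PhiL G E V ε) := hΦ
  set B := (PhiL G E V ε).range with hB
  have hG : 0 < Fintype.card G := Fintype.card_pos
  have hcI : Nat.card (E → DualL G) = Fintype.card G ^ Fintype.card E := by
    rw [Nat.card_fun, card_dualL, Nat.card_eq_fintype_card]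
  have hcB : Nat.card B = Fintype.card G ^ Fintype.card V := by
    rw [← Nat.card_congr (MonoidHom.ofInjective hinj).toEquiv, Nat.card_fun, card_dualL,
      Nat.card_eq_fintype_card]
  have hmul := B.card_eq_card_quotient_mul_card_subgroup
  rw [hcI, hcB] at hmul
  have hcQ : Nat.card ((E → DualL G) ⧸ B)
      = Fintype.card G ^ (Fintype.card E - Fintype.card V) := by
    rcases le_total (Fintype.card V) (Fintype.card E) with h | h
    · apply Nat.eq_of_mul_eq_mul_right (pow_pos hG (Fintype.card V))
      rw [← hmul, ← pow_add, Nat.sub_add_cancel h]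
    · have hle := Nat.pow_le_pow_right hG h
      have hpos : 0 < Nat.card ((E → DualL G) ⧸ B) := Nat.card_pos
      rw [Nat.sub_eq_zero_of_le h, pow_zero]
      have := pow_pos hG (Fintype.card V)
      nlinarith
  let e1 : B ≃ Fin (Fintype.card G ^ Fintype.card V) := Finite.equivFinOfCardEq hcB
  let e2 : ((E → DualL G) ⧸ B) ≃ Fin (Fintype.card G ^ (Fintype.card E - Fintype.card V)) :=
    Finite.equivFinOfCardEq hcQ
  let e0 : (E → DualL G) ≃ ((E → DualL G) ⧸ B) × B := Subgroup.groupEquivQuotientProdSubgroup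
  have he0 : ∀ i, (e0 i).1 = (i : (E → DualL G) ⧸ B) := fun i => rfl
  let e := ((e0.trans (Equiv.prodComm _ _)).trans (e1.prodCongr e2)).symm
  have he : ∀ i j, (e.symm i).2 = (e.symm j).2 ↔ i * j⁻¹ ∈ (PhiL G E V ε).range := by
    intro i j
    change e2 (e0 i).1 = e2 (e0 j).1 ↔ _
    rw [e2.injective.eq_iff, he0, he0, eq_comm, QuotientGroup.eq, mul_comm]
  exact ⟨((AlgEquiv.ofInjective _ (thetaL_injective G E e)).trans
    (Subalgebra.equivOfEq _ _ (range_thetaL G E V ε e he))).symm⟩
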